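/- arXiv:1302.2224 — 2 statements merged into one kernel-verified Lean document; each statement's English description precedes it below -/
import Mathlib

section
/- Fifth Block (two-scale model): let a⁰ : ℝ → ℝ be continuous and 1-periodic with 0 < α ≤ a⁰(y) ≤ β for all y, and set a_N(x) = a⁰(x/ε − 1/2) (so that T_N a_N(x,y) = a⁰(y)). Let f ∈ L²(0,1) and f⁰ ∈ L²((0,1) × (−1/2,1/2)) be such that ∫∫ (T_N f) v dx dy → ∫∫ f⁰ v dx dy for every v ∈ L²((0,1) × (−1/2,1/2)). Assume that for each N, u_N(0) = u_N(1) = 0 and u_N satisfies the weak formulation ∫₀¹ a_N u_N' v' dx = ∫₀¹ f v dx for every continuously differentiable v : [0,1] → ℝ with v(0) = v(1) = 0. Assume further the sequence setting, the two-scale expansion hypothesis, the weak two-scale convergence of the derivatives to η, and that there are a continuously differentiable ū : [0,1] → ℝ and w ∈ L²((0,1) × (−1/2,1/2)) with u⁰(x,y) = ū(x) and η(x,y) = ū'(x) + w(x,y) for almost every (x,y). Then the pair (ū, w) solves the two-scale weak formulation: for every infinitely differentiable v⁰ : ℝ → ℝ with compact support in (0,1) and every infinitely differentiable v¹ : ℝ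 × ℝ → ℝ that is 1-periodic in its second argument and vanishes whenever its first argument lies outside claims a compact subset of (0,1), ∫∫_{(0,1)×(−1/2,1/2)} a⁰(y) (ū'(x) + w(x,y)) ((v⁰)'(x) + (∂v¹/∂y)(x,y)) dx dy = ∫∫_{(0,1)×(−1/2,1/2)} f⁰(x,y) v⁰(x) dx dy. -/
open Set MeasureTheory Filter

/-- Two-scale transform: `(Tu)(x,y) = u(ε(⌊x/ε⌋ + 1/2) + εy)` with `ε = 1/N`. -/
noncomputable def twoScale (N : ℕ) (u : ℝ → ℝ) (x y : ℝ) : ℝ :=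
  u ((1 / (N : ℝ)) * ((⌊x / (1 / (N : ℝ))⌋ : ℝ) + 1 / 2) + (1 / (N : ℝ)) * y)

/-- The two-scale domain `(0,1) × (-1/2, 1/2)`. -/
noncomputable def twoScaleDom : Set (ℝ × ℝ) :=
  Ioo (0 : ℝ) 1 ×ˢ Ioo (-(1 / 2) : ℝ) (1 / 2)

/-!
The two-scale transform is composition with the map `(x, y) ↦ ε (⌊x / ε⌋ + 1 / 2) + ε y`, which
pushes Lebesgue measure on (cell × unit cell) forward to Lebesgue measure on the cell; hence
`∫ h v = ∫∫ (T_N h) (T_N v)`. If `v` is the trace `x ↦ F (x, x / ε - 1 / 2)` of a continuous `F`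
that is 1-periodic in its fast variable, then `T_N v → F` uniformly, so weak convergence
`T_N h_N ⇀ H` in `L²` gives `∫ h_N v → ∫∫ H F`. The two-scale formulation is what remains of the
weak formulation tested with `v⁰(x) + ε v¹(x, x / ε - 1 / 2)`, whose derivative is the trace of
`(v⁰)' + ∂v¹/∂y` up to `O(ε)`.
-/

theorem tendsto_inner_of_weak_of_strong {𝕜 E : Type*} [RCLike 𝕜] [NormedAddCommGroup E]
    [InnerProductSpace 𝕜 E] [CompleteSpace E] {x y : ℕ → E} {x₀ y₀ : E}
    (hx : ∀ v, Tendsto (fun n => inner 𝕜 (x n) v) atTop (nhds (inner 𝕜 x₀ v)))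
    (hy : Tendsto y atTop (nhds y₀)) :
    Tendsto (fun n => inner 𝕜 (x n) (y n)) atTop (nhds (inner 𝕜 x₀ y₀)) := by
  obtain ⟨C, hC⟩ : ∃ C, ∀ n, ‖innerSL 𝕜 (x n)‖ ≤ C := banach_steinhaus fun v => by
    obtain ⟨C, hC⟩ := (Metric.isBounded_range_of_tendsto _ (hx v)).exists_norm_le
    exact ⟨C, fun n => hC _ (mem_range_self n)⟩
  have hdiff : Tendsto (fun n => inner 𝕜 (x n) (y n - y₀)) atTop (nhds 0) := by
    refine squeeze_zero_norm (fun n => ?_) (by simpa using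
      (tendsto_iff_norm_sub_tendsto_zero.mp hy).const_mul C)
    exact ((innerSL 𝕜 (x n)).le_opNorm _).trans (by gcongr; exact hC n)
  simpa [inner_sub_right] using hdiff.add (hx y₀)

theorem inner_memLp_toLp_eq_integral {α : Type*} {m : MeasurableSpace α} {μ : Measure α}
    {f g : α → ℝ} (hf : MemLp f 2 μ) (hg : MemLp g 2 μ) :
    inner ℝ (hf.toLp f) (hg.toLp g) = ∫ a, f a * g a ∂μ := by
  rw [L2.inner_def]
  refine integral_congr_ae ?_
  filter_upwards [hf.coeFn_toLp, hg.coeFn_toLp] with a hfa hga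
  simp [hfa, hga, mul_comm]

theorem tendsto_integral_mul_of_weak_of_strong {α : Type*} {m : MeasurableSpace α} {μ : Measure α}
    {f g : ℕ → α → ℝ} {f₀ g₀ : α → ℝ} (hf : ∀ n, MemLp (f n) 2 μ) (hf₀ : MemLp f₀ 2 μ)
    (hweak : ∀ v, MemLp v 2 μ →
      Tendsto (fun n => ∫ a, f n a * v a ∂μ) atTop (nhds (∫ a, f₀ a * v a ∂μ)))
    (hg : ∀ n, MemLp (g n) 2 μ) (hg₀ : MemLp g₀ 2 μ)
    (hstrong : Tendsto (fun n => eLpNorm (g n - g₀) 2 μ) atTop (nhds 0)) :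
    Tendsto (fun n => ∫ a, f n a * g n a ∂μ) atTop (nhds (∫ a, f₀ a * g₀ a ∂μ)) := by
  simp only [← inner_memLp_toLp_eq_integral (hf _) (hg _), ← inner_memLp_toLp_eq_integral hf₀ hg₀]
  refine tendsto_inner_of_weak_of_strong (fun v => ?_)
    ((Lp.tendsto_Lp_iff_tendsto_eLpNorm'' g hg g₀ hg₀).mpr hstrong)
  rw [← Lp.toLp_coeFn v (Lp.memLp v)]
  simp only [inner_memLp_toLp_eq_integral]
  exact hweak v (Lp.memLp v)

theorem tendsto_eLpNorm_sub_of_tendstoUniformlyOn {α ι E : Type*} {m : MeasurableSpace α}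
    [NormedAddCommGroup E] {μ : Measure α} {s : Set α} (hs : MeasurableSet s) (hμs : μ s ≠ ⊤)
    (p : ENNReal) {l : Filter ι} {f : ι → α → E} {g : α → E} (hfg : TendstoUniformlyOn f g l s) :
    Tendsto (fun i => eLpNorm (f i - g) p (μ.restrict s)) l (nhds 0) := by
  have hscale : Tendsto (fun δ => μ s ^ p.toReal⁻¹ * ENNReal.ofReal δ) (nhdsWithin 0 (Ioi 0))
      (nhds 0) := by
    have hne : μ s ^ p.toReal⁻¹ ≠ ⊤ := ENNReal.rpow_ne_top_of_nonneg (by positivity) hμs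
    simpa using ENNReal.Tendsto.const_mul (ENNReal.continuous_ofReal.tendsto 0 |>.mono_left
      nhdsWithin_le_nhds) (Or.inr hne)
  refine ENNReal.tendsto_nhds_zero.mpr fun e he => ?_
  obtain ⟨δ, hδe, hδ : 0 < δ⟩ :=
    ((ENNReal.tendsto_nhds_zero.mp hscale e he).and self_mem_nhdsWithin).exists
  filter_upwards [Metric.tendstoUniformlyOn_iff.mp hfg δ hδ] with i hi
  refine le_trans ?_ hδe
  simpa using eLpNorm_le_of_ae_bound (p := p) (μ := μ.restrict s) (f := f i - g) (C := δ)
    (ae_restrict_of_forall_mem hs fun x hx => by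
      simpa [dist_eq_norm, norm_sub_rev] using (hi x hx).le)

theorem memLp_restrict_of_continuous_of_isBounded {X E : Type*} [PseudoMetricSpace X]
    [ProperSpace X] [MeasurableSpace X] [OpensMeasurableSpace X] [NormedAddCommGroup E]
    {μ : Measure X} [IsFiniteMeasureOnCompacts μ] {f : X → E} (hf : Continuous f) (p : ENNReal)
    {s : Set X} (hs : Bornology.IsBounded s) : MemLp f p (μ.restrict s) := by
  have hcpt : IsCompact (closure s) := hs.isCompact_closure
  obtain ⟨C, hC⟩ := hcpt.exists_bound_of_continuousOn hf.continuousOn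
  have : IsFiniteMeasure (μ.restrict (closure s)) := ⟨by simpa using hcpt.measure_lt_top⟩
  exact (MemLp.of_bound hf.aestronglyMeasurable C
    (ae_restrict_of_forall_mem isClosed_closure.measurableSet hC)).mono_measure
    (Measure.restrict_mono_set μ subset_closure)

/-- The point of the macroscopic line at which the two-scale transform of cell size `ε` evaluates
its argument: `twoScale N u p.1 p.2` is by definition `u (twoScalePoint (1 / N) p)`. -/
noncomputable def twoScalePoint (ε : ℝ) (p : ℝ × ℝ) : ℝ :=
  ε * ((⌊p.1 / ε⌋ : ℝ) + 1 / 2) + ε * p.2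

theorem measurable_twoScalePoint (ε : ℝ) : Measurable (twoScalePoint ε) := by
  have hfloor : Measurable fun p : ℝ × ℝ => (⌊p.1 / ε⌋ : ℝ) :=
    measurable_from_top.comp (measurable_fst.div_const ε).floor
  unfold twoScalePoint
  fun_prop

theorem twoScalePoint_div {ε : ℝ} (hε : ε ≠ 0) (p : ℝ × ℝ) :
    twoScalePoint ε p / ε = ⌊p.1 / ε⌋ + 1 / 2 + p.2 := by
  rw [twoScalePoint, ← mul_add, mul_div_cancel_left₀ _ hε]

theorem floor_twoScalePoint_div {ε : ℝ} (hε : ε ≠ 0) {p : ℝ × ℝ}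
    (hp : p.2 ∈ Ico (-(1 / 2) : ℝ) (1 / 2)) : ⌊twoScalePoint ε p / ε⌋ = ⌊p.1 / ε⌋ := by
  rw [twoScalePoint_div hε, Int.floor_eq_iff]
  constructor <;> linarith [hp.1, hp.2]

theorem abs_twoScalePoint_sub_lt {ε : ℝ} (hε : 0 < ε) {p : ℝ × ℝ}
    (hp : p.2 ∈ Ico (-(1 / 2) : ℝ) (1 / 2)) : |twoScalePoint ε p - p.1| < ε := by
  have h := Int.abs_sub_lt_one_of_floor_eq_floor (floor_twoScalePoint_div hε.ne' hp)
  rwa [← sub_div, abs_div, abs_of_pos hε, div_lt_one hε] at h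

theorem twoScalePoint_eq_of_mem_cell {ε : ℝ} (hε : 0 < ε) {k : ℤ} {p : ℝ × ℝ}
    (hp : p.1 ∈ Ico (k • ε) ((k + 1) • ε)) :
    twoScalePoint ε p = ε * ((k : ℝ) + 1 / 2) + ε * p.2 := by
  have hfloor : ⌊p.1 / ε⌋ = k := by
    simp only [mem_Ico, zsmul_eq_mul, Int.cast_add, Int.cast_one] at hp
    rwa [Int.floor_eq_iff, le_div_iff₀ hε, div_lt_iff₀ hε]
  rw [twoScalePoint, hfloor]

theorem measurePreserving_const_add_const_mul {a : ℝ} (ha : a ≠ 0) (c : ℝ) :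
    MeasurePreserving (fun y => c + a * y) (ENNReal.ofReal |a| • volume) volume :=
  (measurePreserving_add_left volume c).comp
    ⟨measurable_const_mul a, by rw [Measure.map_smul, Real.smul_map_volume_mul_left ha]⟩

theorem map_twoScalePoint_cell {ε : ℝ} (hε : 0 < ε) (k : ℤ) :
    ((volume.restrict (Ico (k • ε) ((k + 1) • ε))).prod
        (volume.restrict (Ico (-(1 / 2) : ℝ) (1 / 2)))).map (twoScalePoint ε)
      = volume.restrict (Ico (k • ε) ((k + 1) • ε)) := by
  set J := Ico (-(1 / 2) : ℝ) (1 / 2)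
  set I := Ico (k • ε) ((k + 1) • ε)
  let A : ℝ → ℝ := fun y => ε * ((k : ℝ) + 1 / 2) + ε * y
  have hA : MeasurePreserving A (ENNReal.ofReal ε • volume) volume := by
    simpa only [abs_of_pos hε] using
      measurePreserving_const_add_const_mul hε.ne' (ε * ((k : ℝ) + 1 / 2))
  have hpre : A ⁻¹' I = J := by
    ext y
    simp only [A, I, J, mem_preimage, mem_Ico, zsmul_eq_mul, Int.cast_add, Int.cast_one]
    constructor <;> rintro ⟨h₁, h₂⟩ <;> constructor <;> nlinarith
  have hvol : volume I = ENNReal.ofReal ε := by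
    rw [Real.volume_Ico, add_zsmul, one_zsmul, add_sub_cancel_left]
  have haffine : twoScalePoint ε =ᵐ[(volume.restrict I).prod (volume.restrict J)] A ∘ Prod.snd := by
    rw [Measure.prod_restrict]
    refine ae_restrict_of_forall_mem (measurableSet_Ico.prod measurableSet_Ico) fun p hp => ?_
    exact twoScalePoint_eq_of_mem_cell hε hp.1
  calc _ = (((volume.restrict I).prod (volume.restrict J)).map Prod.snd).map A := by
        rw [Measure.map_congr haffine, Measure.map_map hA.measurable measurable_snd]
    _ = ((ENNReal.ofReal ε • volume).restrict (A ⁻¹' I)).map A := by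
        rw [Measure.map_snd_prod, hpre, Measure.restrict_smul, Measure.restrict_apply_univ, hvol]
    _ = volume.restrict I := (hA.restrict_preimage measurableSet_Ico).map_eq

theorem measurePreserving_twoScalePoint {ε : ℝ} (hε : 0 < ε) :
    MeasurePreserving (twoScalePoint ε)
      ((volume : Measure ℝ).prod (volume.restrict (Ico (-(1 / 2) : ℝ) (1 / 2)))) volume := by
  refine ⟨measurable_twoScalePoint ε, ?_⟩
  have hcells : Measure.sum (fun k : ℤ => volume.restrict (Ico (k • ε) ((k + 1) • ε)))
      = (volume : Measure ℝ) := by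
    rw [← Measure.restrict_iUnion (pairwise_disjoint_Ico_zsmul ε) fun _ => measurableSet_Ico,
      iUnion_Ico_zsmul hε, Measure.restrict_univ]
  conv_lhs => rw [← hcells]
  rw [Measure.prod_sum_left, Measure.map_sum (measurable_twoScalePoint ε).aemeasurable]
  simp only [map_twoScalePoint_cell hε, hcells]

theorem measurePreserving_twoScalePoint_restrict {N : ℕ} (hN : N ≠ 0) :
    MeasurePreserving (twoScalePoint (1 / N)) (volume.restrict twoScaleDom)
      (volume.restrict (Ioo (0 : ℝ) 1)) := by
  set J := Ico (-(1 / 2) : ℝ) (1 / 2)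
  have hN' : (0 : ℝ) < N := by positivity
  have hmem_iff : ∀ z : ℝ, z ∈ Ico (0 : ℝ) 1 ↔ ⌊z / (1 / N)⌋ ∈ Ico (0 : ℤ) N := fun z => by
    simp only [mem_Ico, Int.floor_nonneg, Int.floor_lt, Int.cast_natCast, div_div_eq_mul_div,
      div_one, mul_nonneg_iff_of_pos_right hN', mul_lt_iff_lt_one_left hN']
  have h := (measurePreserving_twoScalePoint (one_div_pos.mpr hN')).restrict_preimage
    (measurableSet_Ico (a := (0 : ℝ)) (b := 1))
  have hae : twoScalePoint (1 / N) ⁻¹' Ico 0 1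
      =ᵐ[(volume : Measure ℝ).prod (volume.restrict J)] Ico (0 : ℝ) 1 ×ˢ univ := by
    have : ∀ᵐ p ∂(volume : Measure ℝ).prod (volume.restrict J), p.2 ∈ J :=
      Measure.quasiMeasurePreserving_snd.ae (ae_restrict_mem measurableSet_Ico)
    refine eventuallyEq_set.mpr ?_
    filter_upwards [this] with p hp
    simp only [mem_preimage, hmem_iff, floor_twoScalePoint_div (one_div_pos.mpr hN').ne' hp,
      mem_prod, mem_univ, and_true]
  rw [Measure.restrict_congr_set hae, ← Measure.prod_restrict, Measure.restrict_univ] at h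
  rwa [twoScaleDom, Measure.volume_eq_prod, ← Measure.prod_restrict,
    restrict_Ioo_eq_restrict_Ico, restrict_Ioo_eq_restrict_Ico]

theorem measurableSet_twoScaleDom : MeasurableSet twoScaleDom :=
  measurableSet_Ioo.prod measurableSet_Ioo

theorem isBounded_twoScaleDom : Bornology.IsBounded twoScaleDom :=
  (Metric.isBounded_Ioo _ _).prod (Metric.isBounded_Ioo _ _)

theorem memLp_twoScale {u : ℝ → ℝ} {q : ENNReal} (hu : MemLp u q (volume.restrict (Ioo 0 1)))
    (N : ℕ) : MemLp (fun p => twoScale N u p.1 p.2) q (volume.restrict twoScaleDom) := by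
  rcases eq_or_ne N 0 with rfl | hN
  -- Since `1 / 0 = 0`, the transform `T_0 u` is the constant `u 0`.
  · have : IsFiniteMeasure (volume.restrict twoScaleDom) :=
      ⟨by simpa only [Measure.restrict_apply_univ] using isBounded_twoScaleDom.measure_lt_top⟩
    simpa only [twoScale, Nat.cast_zero, div_zero, zero_mul, add_zero] using memLp_const (u 0)
  · exact hu.comp_measurePreserving (measurePreserving_twoScalePoint_restrict hN)

theorem integral_twoScale {u : ℝ → ℝ} (hu : AEStronglyMeasurable u (volume.restrict (Ioo 0 1)))
    {N : ℕ} (hN : N ≠ 0) :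
    ∫ p in twoScaleDom, twoScale N u p.1 p.2 = ∫ x in Ioo (0 : ℝ) 1, u x := by
  have h := measurePreserving_twoScalePoint_restrict hN
  rw [← h.map_eq, integral_map h.measurable.aemeasurable (h.map_eq ▸ hu)]
  rfl

theorem tendstoUniformlyOn_twoScalePoint :
    TendstoUniformlyOn (fun (N : ℕ) p => twoScalePoint (1 / N) p) Prod.fst atTop twoScaleDom := by
  refine Metric.tendstoUniformlyOn_iff.mpr fun δ hδ => ?_
  filter_upwards [eventually_gt_atTop 0,
    tendsto_one_div_atTop_nhds_zero_nat.eventually_lt_const hδ] with N hN hNδ p hp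
  rw [dist_comm, Real.dist_eq]
  exact (abs_twoScalePoint_sub_lt (by positivity) (Ioo_subset_Ico_self hp.2)).trans hNδ

/-- The oscillating one-scale function `x ↦ F (x, x / ε - 1 / 2)` carried by a function `F` of the
slow and the fast variable. The shift places `y = 0` at the cell centers `(c - 1/2) ε`, as
`twoScale` does. -/
noncomputable def oscillate {E : Type*} (ε : ℝ) (F : ℝ × ℝ → E) (x : ℝ) : E :=
  F (x, x / ε - 1 / 2)

theorem oscillate_twoScalePoint {E : Type*} {ε : ℝ} (hε : ε ≠ 0) {F : ℝ × ℝ → E}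
    (hF : ∀ x, Function.Periodic (fun y => F (x, y)) 1) (p : ℝ × ℝ) :
    oscillate ε F (twoScalePoint ε p) = F (twoScalePoint ε p, p.2) := by
  have hfast : twoScalePoint ε p / ε - 1 / 2 = p.2 + ⌊p.1 / ε⌋ * 1 := by
    rw [twoScalePoint_div hε]; ring
  rw [oscillate, hfast]
  exact (hF _).int_mul _ _

theorem continuous_oscillate {E : Type*} [TopologicalSpace E] {F : ℝ × ℝ → E} (hF : Continuous F)
    (ε : ℝ) : Continuous (oscillate ε F) :=
  hF.comp (continuous_id.prodMk ((continuous_id.div_const ε).sub continuous_const))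

theorem hasDerivAt_oscillate {E : Type*} [NormedAddCommGroup E] [NormedSpace ℝ E]
    {V : ℝ × ℝ → E} {ε x : ℝ} (hV : DifferentiableAt ℝ V (x, x / ε - 1 / 2)) :
    HasDerivAt (oscillate ε V) (oscillate ε (fun p => fderiv ℝ V p (1, 0)) x
      + ε⁻¹ • oscillate ε (fun p => fderiv ℝ V p (0, 1)) x) x := by
  have hcurve : HasDerivAt (fun x : ℝ => (x, x / ε - 1 / 2)) (1, 1 / ε) x :=
    (hasDerivAt_id x).prodMk (((hasDerivAt_id x).div_const ε).sub_const (1 / 2))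
  have hsplit : ((1, 1 / ε) : ℝ × ℝ) = (1, 0) + ε⁻¹ • (0, 1) := by simp
  have := hV.hasFDerivAt.comp_hasDerivAt x hcurve
  rwa [hsplit, map_add, map_smul] at this

theorem memLp_oscillate {E : Type*} [NormedAddCommGroup E] {F : ℝ × ℝ → E} (hF : Continuous F)
    (ε : ℝ) (q : ENNReal) :
    MemLp (oscillate ε F) q (volume.restrict (Ioo 0 1)) :=
  memLp_restrict_of_continuous_of_isBounded (continuous_oscillate hF ε) q
    (Metric.isBounded_Ioo 0 1)

theorem tendstoUniformlyOn_comp_twoScalePoint {E : Type*} [UniformSpace E] {F : ℝ × ℝ → E}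
    (hF : Continuous F) :
    TendstoUniformlyOn (fun (N : ℕ) p => F (twoScalePoint (1 / N) p, p.2)) F atTop
      twoScaleDom := by
  have hpair : TendstoUniformlyOn (fun (N : ℕ) p => (twoScalePoint (1 / N) p, p.2)) id atTop
      twoScaleDom := Metric.tendstoUniformlyOn_iff.mpr fun δ hδ => by
    filter_upwards [Metric.tendstoUniformlyOn_iff.mp tendstoUniformlyOn_twoScalePoint δ hδ]
      with N hN p hp
    simpa [Prod.dist_eq, hδ] using hN p hp
  have hcpt : IsCompact (Metric.cthickening 1 twoScaleDom) :=
    Metric.isCompact_of_isClosed_isBounded Metric.isClosed_cthickening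
      isBounded_twoScaleDom.cthickening
  refine UniformContinuousOn.comp_tendstoUniformlyOn_eventually ?_
    (fun p hp => Metric.self_subset_cthickening _ hp)
    (hcpt.uniformContinuousOn_of_continuous hF.continuousOn) hpair
  filter_upwards [Metric.tendstoUniformlyOn_iff.mp hpair 1 one_pos] with N hN p hp
  exact Metric.mem_cthickening_of_dist_le _ p _ _ hp (dist_comm p _ ▸ (hN p hp).le)

theorem tendsto_eLpNorm_twoScale_oscillate_sub {F : ℝ × ℝ → ℝ} (hF : Continuous F)
    (hFper : ∀ x, Function.Periodic (fun y => F (x, y)) 1) (q : ENNReal) :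
    Tendsto (fun N : ℕ => eLpNorm ((fun p => twoScale N (oscillate (1 / N) F) p.1 p.2) - F) q
      (volume.restrict twoScaleDom)) atTop (nhds 0) := by
  refine tendsto_eLpNorm_sub_of_tendstoUniformlyOn measurableSet_twoScaleDom
    isBounded_twoScaleDom.measure_lt_top.ne q
    ((tendstoUniformlyOn_comp_twoScalePoint hF).congr ?_)
  filter_upwards [eventually_ne_atTop 0] with N hN p _
  exact (oscillate_twoScalePoint (one_div_ne_zero (Nat.cast_ne_zero.mpr hN)) hFper p).symm

/-- Weak two-scale convergence in `L²`: the two-scale transforms of `h N` converge to `H` weakly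
in `L²` of the two-scale domain. Square integrability of the sequence and of the limit is part of
the notion. -/
structure WeakTwoScaleLimit (h : ℕ → ℝ → ℝ) (H : ℝ × ℝ → ℝ) : Prop where
  memLp : ∀ N, MemLp (h N) 2 (volume.restrict (Ioo 0 1))
  memLp_limit : MemLp H 2 (volume.restrict twoScaleDom)
  tendsto : ∀ v : ℝ × ℝ → ℝ, MemLp v 2 (volume.restrict twoScaleDom) →
    Tendsto (fun N => ∫ p in twoScaleDom, twoScale N (h N) p.1 p.2 * v p) atTop
      (nhds (∫ p in twoScaleDom, H p * v p))

namespace WeakTwoScaleLimit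

variable {h : ℕ → ℝ → ℝ} {H : ℝ × ℝ → ℝ} {F G : ℝ × ℝ → ℝ}

theorem tendsto_integral_mul_oscillate (hH : WeakTwoScaleLimit h H) (hF : Continuous F)
    (hFper : ∀ x, Function.Periodic (fun y => F (x, y)) 1) :
    Tendsto (fun N : ℕ => ∫ x in Ioo (0 : ℝ) 1, h N x * oscillate (1 / N) F x) atTop
      (nhds (∫ p in twoScaleDom, H p * F p)) := by
  have hosc := fun N : ℕ => memLp_oscillate hF (1 / N) 2
  refine (tendsto_integral_mul_of_weak_of_strong (fun N => memLp_twoScale (hH.memLp N) N)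
    hH.memLp_limit hH.tendsto (fun N => memLp_twoScale (hosc N) N)
    (memLp_restrict_of_continuous_of_isBounded hF 2 isBounded_twoScaleDom)
    (tendsto_eLpNorm_twoScale_oscillate_sub hF hFper 2)).congr' ?_
  filter_upwards [eventually_ne_atTop 0] with N hN
  exact integral_twoScale ((hH.memLp N).aestronglyMeasurable.mul (hosc N).aestronglyMeasurable) hN

theorem tendsto_integral_mul_oscillate_add (hH : WeakTwoScaleLimit h H)
    (hF : Continuous F) (hFper : ∀ x, Function.Periodic (fun y => F (x, y)) 1)
    (hG : Continuous G) (hGper : ∀ x, Function.Periodic (fun y => G (x, y)) 1) :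
    Tendsto (fun N : ℕ => ∫ x in Ioo (0 : ℝ) 1,
        h N x * (oscillate (1 / N) F x + 1 / N * oscillate (1 / N) G x)) atTop
      (nhds (∫ p in twoScaleDom, H p * F p)) := by
  have hlim := (hH.tendsto_integral_mul_oscillate hF hFper).add
    (tendsto_one_div_atTop_nhds_zero_nat.mul (hH.tendsto_integral_mul_oscillate hG hGper))
  rw [zero_mul, add_zero] at hlim
  refine hlim.congr fun N => ?_
  have hFint : Integrable (fun x => h N x * oscillate (1 / N) F x) (volume.restrict (Ioo 0 1)) :=
    (hH.memLp N).integrable_mul (memLp_oscillate hF _ 2)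
  have hGint : Integrable (fun x => h N x * oscillate (1 / N) G x) (volume.restrict (Ioo 0 1)) :=
    (hH.memLp N).integrable_mul (memLp_oscillate hG _ 2)
  rw [← integral_const_mul, ← integral_add hFint (hGint.const_mul _)]
  exact integral_congr_ae (.of_forall fun x => by ring)

end WeakTwoScaleLimit

theorem periodic_fderiv_snd {E F G : Type*} [NormedAddCommGroup E] [NormedSpace ℝ E]
    [NormedAddCommGroup F] [NormedSpace ℝ F] [NormedAddCommGroup G] [NormedSpace ℝ G]
    {V : E × F → G} {c : F} (hV : ∀ x, Function.Periodic (fun y => V (x, y)) c) (x : E) :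
    Function.Periodic (fun y => fderiv ℝ V (x, y)) c := fun y => by
  have hshift : (fun q => V (q + (0, c))) = V := by
    funext ⟨x, y⟩
    simpa using hV x y
  simpa [hshift] using (fderiv_comp_add_right (𝕜 := ℝ) (f := V) (x := (x, y)) (0, c)).symm

theorem deriv_snd_eq_fderiv {E G : Type*} [NormedAddCommGroup E] [NormedSpace ℝ E]
    [NormedAddCommGroup G] [NormedSpace ℝ G] {V : E × ℝ → G} {p : E × ℝ}
    (hV : DifferentiableAt ℝ V p) :
    deriv (fun y => V (p.1, y)) p.2 = fderiv ℝ V p (0, 1) :=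
  (hV.hasFDerivAt.comp_hasDerivAt p.2
    ((hasDerivAt_const p.2 p.1).prodMk (hasDerivAt_id p.2))).deriv

theorem deriv_add_mul_oscillate {v : ℝ → ℝ} {V : ℝ × ℝ → ℝ} {ε x : ℝ} (hε : ε ≠ 0)
    (hv : DifferentiableAt ℝ v x) (hV : DifferentiableAt ℝ V (x, x / ε - 1 / 2)) :
    deriv (fun x => v x + ε * oscillate ε V x) x
      = oscillate ε (fun p => deriv v p.1 + fderiv ℝ V p (0, 1)) x
        + ε * oscillate ε (fun p => fderiv ℝ V p (1, 0)) x := by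
  refine (hv.hasDerivAt.add ((hasDerivAt_oscillate hV).const_mul ε)).deriv.trans ?_
  rw [smul_eq_mul, mul_add, mul_inv_cancel_left₀ hε]
  simp only [oscillate]
  ring

theorem contDiff_add_mul_oscillate {v : ℝ → ℝ} {V : ℝ × ℝ → ℝ} {n : WithTop ℕ∞}
    (hv : ContDiff ℝ n v) (hV : ContDiff ℝ n V) (ε : ℝ) :
    ContDiff ℝ n fun x => v x + ε * oscillate ε V x :=
  hv.add (contDiff_const.mul
    (hV.comp (contDiff_id.prodMk ((contDiff_id.div_const ε).sub contDiff_const))))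

theorem fifth_block_two_scale_model_general {g : ℕ → ℝ → ℝ} {η : ℝ × ℝ → ℝ}
    (hη : WeakTwoScaleLimit g η) {f : ℕ → ℝ → ℝ} {f0 : ℝ × ℝ → ℝ} (hf0 : WeakTwoScaleLimit f f0)
    {a : ℝ → ℝ} (ha : Continuous a) (haper : Function.Periodic a 1)
    (hweakform : ∀ N : ℕ, ∀ v : ℝ → ℝ, ContDiff ℝ 1 v → v 0 = 0 → v 1 = 0 →
      ∫ x in Ioo (0 : ℝ) 1, a (x / (1 / N) - 1 / 2) * g N x * deriv v x
        = ∫ x in Ioo (0 : ℝ) 1, f N x * v x)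
    {v0 : ℝ → ℝ} (hv0 : ContDiff ℝ 1 v0) (hv0_zero : v0 0 = 0) (hv0_one : v0 1 = 0)
    {v1 : ℝ → ℝ → ℝ} (hv1 : ContDiff ℝ 1 fun p : ℝ × ℝ => v1 p.1 p.2)
    (hv1per : ∀ x, Function.Periodic (v1 x) 1) (hv1_zero : ∀ y, v1 0 y = 0)
    (hv1_one : ∀ y, v1 1 y = 0) :
    ∫ p in twoScaleDom, a p.2 * η p * (deriv v0 p.1 + deriv (v1 p.1) p.2)
      = ∫ p in twoScaleDom, f0 p * v0 p.1 := by
  let V : ℝ × ℝ → ℝ := fun p => v1 p.1 p.2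
  have hVd : Differentiable ℝ V := hv1.differentiable one_ne_zero
  have hfderiv : Continuous (fderiv ℝ V) := hv1.continuous_fderiv one_ne_zero
  have hfderivper : ∀ x, Function.Periodic (fun y => fderiv ℝ V (x, y)) 1 :=
    periodic_fderiv_snd hv1per
  have hdv0 : Continuous (deriv v0) := hv0.continuous_deriv le_rfl
  have hleft := hη.tendsto_integral_mul_oscillate_add
    (F := fun p => a p.2 * (deriv v0 p.1 + fderiv ℝ V p (0, 1)))
    (G := fun p => a p.2 * fderiv ℝ V p (1, 0))
    ((ha.comp continuous_snd).mul
      ((hdv0.comp continuous_fst).add (hfderiv.clm_apply continuous_const)))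
    (fun x y => by simp only [haper y, hfderivper x y])
    ((ha.comp continuous_snd).mul (hfderiv.clm_apply continuous_const))
    (fun x y => by simp only [haper y, hfderivper x y])
  have hright := hf0.tendsto_integral_mul_oscillate_add (F := fun p => v0 p.1) (G := V)
    (hv0.continuous.comp continuous_fst) (fun _ _ => rfl) hv1.continuous hv1per
  calc ∫ p in twoScaleDom, a p.2 * η p * (deriv v0 p.1 + deriv (v1 p.1) p.2)
      = ∫ p in twoScaleDom, η p * (a p.2 * (deriv v0 p.1 + fderiv ℝ V p (0, 1))) := by
        refine integral_congr_ae (.of_forall fun p => ?_)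
        simp only [← deriv_snd_eq_fderiv (hVd p), V]
        ring
    _ = ∫ p in twoScaleDom, f0 p * v0 p.1 := tendsto_nhds_unique hleft (hright.congr' ?_)
  filter_upwards [eventually_ne_atTop 0] with N hN
  have hε : (1 / N : ℝ) ≠ 0 := one_div_ne_zero (Nat.cast_ne_zero.mpr hN)
  refine (hweakform N _ (contDiff_add_mul_oscillate hv0 hv1 (1 / N))
    (by simp [oscillate, hv0_zero, hv1_zero]) (by simp [oscillate, hv0_one, hv1_one])).symm.trans
    (integral_congr_ae (.of_forall fun x => ?_))
  beta_reduce
  rw [deriv_add_mul_oscillate hε (hv0.differentiable one_ne_zero x) (hVd _)]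
  simp only [oscillate]
  ring

/-- **Fifth Block: two-scale model.** Under the sequence setting with the
oscillating coefficient `a_N(x) = a⁰(x/ε − 1/2)`, the Dirichlet conditions and
the weak formulations `∫ a_N u_N' v' = ∫ f v`, the pair `(ū, w)` from the
two-scale limits solves the two-scale weak formulation
`∫∫ a⁰(y)(ū' + w)((v⁰)' + ∂v¹/∂y) = ∫∫ f⁰ v⁰`. -/
theorem fifth_block_two_scale_model
    (u : ℕ → ℝ → ℝ) (hu : ∀ N, ContDiff ℝ 1 (u N))
    (C : ℝ) (hC : 0 < C)
    (hbound : ∀ N : ℕ, (∫ x in Ioo (0 : ℝ) 1, (u N x) ^ 2) ≤ C ^ 2 ∧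
      (∫ x in Ioo (0 : ℝ) 1, (deriv (u N) x) ^ 2) ≤ C ^ 2)
    (u0 u1 : ℝ × ℝ → ℝ)
    (hu0 : MemLp u0 2 (volume.restrict twoScaleDom))
    (hu1 : MemLp u1 2 (volume.restrict twoScaleDom))
    (hexp : ∀ v : ℝ × ℝ → ℝ, MemLp v 2 (volume.restrict twoScaleDom) →
      Tendsto (fun N : ℕ => (N : ℝ) *
          ∫ p in twoScaleDom,
            (twoScale N (u N) p.1 p.2 - u0 p - (1 / (N : ℝ)) * u1 p) * v p)
        atTop (nhds 0))
    (η : ℝ × ℝ → ℝ) (hη : MemLp η 2 (volume.restrict twoScaleDom))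
    (hweakconv : ∀ v : ℝ × ℝ → ℝ, MemLp v 2 (volume.restrict twoScaleDom) →
      Tendsto (fun N : ℕ =>
          ∫ p in twoScaleDom, twoScale N (deriv (u N)) p.1 p.2 * v p)
        atTop (nhds (∫ p in twoScaleDom, η p * v p)))
    (a : ℝ → ℝ) (α β : ℝ)
    (ha : Continuous a) (haper : ∀ y, a (y + 1) = a y)
    (hα : 0 < α) (hαβ : α ≤ β) (habound : ∀ y, α ≤ a y ∧ a y ≤ β)
    (f : ℝ → ℝ) (hf : MemLp f 2 (volume.restrict (Ioo (0 : ℝ) 1)))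
    (f0 : ℝ × ℝ → ℝ) (hf0 : MemLp f0 2 (volume.restrict twoScaleDom))
    (hf0conv : ∀ v : ℝ × ℝ → ℝ, MemLp v 2 (volume.restrict twoScaleDom) →
      Tendsto (fun N : ℕ => ∫ p in twoScaleDom, twoScale N f p.1 p.2 * v p)
        atTop (nhds (∫ p in twoScaleDom, f0 p * v p)))
    (hdir : ∀ N : ℕ, u N 0 = 0 ∧ u N 1 = 0)
    (hweakform : ∀ N : ℕ, ∀ v : ℝ → ℝ, ContDiff ℝ 1 v → v 0 = 0 → v 1 = 0 →
      ∫ x in Ioo (0 : ℝ) 1,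
          a (x / (1 / (N : ℝ)) - 1 / 2) * deriv (u N) x * deriv v x
        = ∫ x in Ioo (0 : ℝ) 1, f x * v x)
    (ub : ℝ → ℝ) (hub : ContDiff ℝ 1 ub)
    (w : ℝ × ℝ → ℝ) (hw : MemLp w 2 (volume.restrict twoScaleDom))
    (hu0eq : ∀ᵐ p ∂(volume.restrict twoScaleDom),
      u0 p = ub p.1 ∧ η p = deriv ub p.1 + w p) :
    ∀ v0 : ℝ → ℝ, ContDiff ℝ (⊤ : ℕ∞) v0 → HasCompactSupport v0 →
      tsupport v0 ⊆ Ioo (0 : ℝ) 1 →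
    ∀ v1 : ℝ → ℝ → ℝ, ContDiff ℝ (⊤ : ℕ∞) (fun p : ℝ × ℝ => v1 p.1 p.2) →
      (∀ x y : ℝ, v1 x (y + 1) = v1 x y) →
      (∃ K : Set ℝ, IsCompact K ∧ K ⊆ Ioo (0 : ℝ) 1 ∧
        ∀ x ∉ K, ∀ y : ℝ, v1 x y = 0) →
      ∫ p in twoScaleDom,
          a p.2 * (deriv ub p.1 + w p)
            * (deriv v0 p.1 + deriv (fun y => v1 p.1 y) p.2)
        = ∫ p in twoScaleDom, f0 p * v0 p.1 := by
  intro v0 hv0 _ hv0s v1 hv1 hv1per ⟨K, _, hKs, hv1K⟩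
  have hv0_eq (x : ℝ) (hx : x ∉ Ioo (0 : ℝ) 1) : v0 x = 0 :=
    image_eq_zero_of_notMem_tsupport fun h => hx (hv0s h)
  have hv1_eq (x : ℝ) (hx : x ∉ Ioo (0 : ℝ) 1) : ∀ y, v1 x y = 0 := hv1K x fun h => hx (hKs h)
  have hη_eq : ∫ p in twoScaleDom,
        a p.2 * (deriv ub p.1 + w p) * (deriv v0 p.1 + deriv (v1 p.1) p.2)
      = ∫ p in twoScaleDom, a p.2 * η p * (deriv v0 p.1 + deriv (v1 p.1) p.2) :=
    integral_congr_ae (hu0eq.mono fun p hp => by simp only [hp.2])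
  have hlim : WeakTwoScaleLimit (fun N => deriv (u N)) η :=
    ⟨fun N => memLp_restrict_of_continuous_of_isBounded ((hu N).continuous_deriv le_rfl) 2
      (Metric.isBounded_Ioo 0 1), hη, hweakconv⟩
  exact hη_eq.trans (fifth_block_two_scale_model_general hlim ⟨fun _ => hf, hf0, hf0conv⟩ ha haper
    hweakform (hv0.of_le (by exact_mod_cast le_top)) (hv0_eq 0 (by simp)) (hv0_eq 1 (by simp))
    (hv1.of_le (by exact_mod_cast le_top)) hv1per (hv1_eq 0 (by simp)) (hv1_eq 1 (by simp)))
end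

section
/- Seventh Block (macroscopic / homogenized problem): let f⁰ ∈ L²((0,1) × (−1/2,1/2)), let ū : [0,1] → ℝ be continuously differentiable, and let ũ¹ : [0,1] × ℝ → ℝ be continuous, 1-periodic in its second argument, with continuous partial derivative satisfying (∂ũ¹/∂y)(x,y) = ū'(x) (θ¹)'(y) for all x, y. Suppose the two-scale weak formulation holds: for every continuously differentiable v⁰ : ℝ → ℝ with compact support in (0,1) and every continuously differentiable v¹ : ℝ × ℝ → ℝ that is 1-periodic in its second argument and vanishes whenever its first argument lies outside a compact subset of (0,1), ∫∫_{(0,1)×(−1/2,1/2)} a⁰(y) (ū'(x) + (∂ũ¹/∂y)(x,y)) ((v⁰)'(x) + (∂v¹/∂y)(x,y)) dx dy = ∫∫ f⁰(x,y) v⁰(x) dx dy. Then ū solves the homogenized weak formulation: for every continuously differentiable v⁰ : ℝ → ℝ with compact support in (0,1), ∫₀¹ a^H ū'(x) (v⁰)'(x) dx = ∫₀¹ f^H(x) v⁰(x) dx, where a^H = ∫_{−1/2}^{1/2} a⁰(y) (1 + (θ¹)'(y))² dy and f^H(x) = ∫_{−1/2}^{1/2} f⁰(x,y) dy. -/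
open Set MeasureTheory Filter

/-- The harmonic mean `h = (∫_{-1/2}^{1/2} 1/a⁰)⁻¹` of `a⁰` over the unit cell. -/
noncomputable def harmMean (a : ℝ → ℝ) : ℝ :=
  (∫ y in (-(1 / 2) : ℝ)..(1 / 2), 1 / a y)⁻¹

/-- The cell corrector `θ¹(y) = ∫₀^y (h/a⁰(s) − 1) ds`. -/
noncomputable def theta1 (a : ℝ → ℝ) (y : ℝ) : ℝ :=
  ∫ s in (0 : ℝ)..y, (harmMean a / a s - 1)

/-- The homogenized coefficient `a^H = ∫_{-1/2}^{1/2} a⁰ (1 + (θ¹)')²`. -/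
noncomputable def aH (a : ℝ → ℝ) : ℝ :=
  ∫ y in (-(1 / 2) : ℝ)..(1 / 2), a y * (1 + deriv (theta1 a) y) ^ 2

/-- The homogenized right-hand side `f^H(x) = ∫_{-1/2}^{1/2} f⁰(x,y) dy`. -/
noncomputable def fH (f0 : ℝ × ℝ → ℝ) (x : ℝ) : ℝ :=
  ∫ y in (-(1 / 2) : ℝ)..(1 / 2), f0 (x, y)

/-!
The corrector `θ¹` makes the cell flux `a⁰ (1 + (θ¹)')` constant in `y`, equal to the harmonic mean
`h`, and hence `a^H = h ∫ (1 + (θ¹)') = h² ∫ 1/a⁰ = h`. Testing the two-scale problem with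
`v¹ = 0`, the left integrand is `h ū'(x) (v⁰)'(x)`, which is independent of `y` over a cell of
length one, while Fubini's theorem averages `f⁰` over the cell on the right.
-/

section Cell

variable {a : ℝ → ℝ}

lemma deriv_theta1 (ha : Continuous a) (ha0 : ∀ y, a y ≠ 0) (y : ℝ) :
    deriv (theta1 a) y = harmMean a / a y - 1 :=
  ((continuous_const.div ha ha0).sub continuous_const).deriv_integral _ 0 y

lemma mul_one_add_deriv_theta1 (ha : Continuous a) (ha0 : ∀ y, a y ≠ 0) (y : ℝ) :
    a y * (1 + deriv (theta1 a) y) = harmMean a := by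
  rw [deriv_theta1 ha ha0, add_sub_cancel, mul_div_cancel₀ _ (ha0 y)]

lemma aH_eq_harmMean (ha : Continuous a) (ha0 : ∀ y, a y ≠ 0) : aH a = harmMean a := by
  have energy_density (y : ℝ) :
      a y * (1 + deriv (theta1 a) y) ^ 2 = harmMean a ^ 2 * (1 / a y) := by
    rw [← mul_one_add_deriv_theta1 ha ha0 y]
    field_simp [ha0 y]
  calc aH a = harmMean a ^ 2 * ∫ y in (-(1 / 2) : ℝ)..(1 / 2), 1 / a y := by
        simp only [aH, energy_density, intervalIntegral.integral_const_mul]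
    _ = harmMean a ^ 2 * (harmMean a)⁻¹ := by rw [harmMean, inv_inv]
    _ = harmMean a := by rw [sq, mul_self_mul_inv]

end Cell

lemma volume_restrict_twoScaleDom :
    (volume.restrict twoScaleDom : Measure (ℝ × ℝ)) =
      (volume.restrict (Ioo (0 : ℝ) 1)).prod (volume.restrict (Ioo (-(1 / 2) : ℝ) (1 / 2))) := by
  rw [Measure.prod_restrict, ← Measure.volume_eq_prod, twoScaleDom]

instance isFiniteMeasure_restrict_twoScaleDom :
    IsFiniteMeasure (volume.restrict twoScaleDom) := by
  rw [volume_restrict_twoScaleDom]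
  infer_instance

lemma setIntegral_twoScaleDom_fun_fst {E : Type*} [NormedAddCommGroup E] [NormedSpace ℝ E]
    (g : ℝ → E) : ∫ p in twoScaleDom, g p.1 = ∫ x in Ioo (0 : ℝ) 1, g x := by
  have cell_volume : (volume.restrict (Ioo (-(1 / 2) : ℝ) (1 / 2))).real univ = 1 := by
    norm_num [measureReal_restrict_apply_univ]
  rw [volume_restrict_twoScaleDom, integral_fun_fst, cell_volume, one_smul]

lemma integrableOn_twoScaleDom_mul_fst {f : ℝ × ℝ → ℝ} {v : ℝ → ℝ}
    (hf : IntegrableOn f twoScaleDom) (hv : ContinuousOn v (Icc 0 1)) :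
    IntegrableOn (fun p => f p * v p.1) twoScaleDom := by
  have hmeas : MeasurableSet twoScaleDom := measurableSet_Ioo.prod measurableSet_Ioo
  have fst_mem : ∀ p ∈ twoScaleDom, p.1 ∈ Icc (0 : ℝ) 1 := fun p hp => Ioo_subset_Icc_self hp.1
  obtain ⟨C, hC⟩ := isCompact_Icc.exists_bound_of_continuousOn hv
  exact hf.mul_bdd (c := C)
    ((hv.comp continuousOn_fst fst_mem).aestronglyMeasurable hmeas)
    (ae_restrict_of_forall_mem hmeas fun p hp => hC p.1 (fst_mem p hp))

lemma setIntegral_twoScaleDom_mul_fst {f : ℝ × ℝ → ℝ} {v : ℝ → ℝ}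
    (hf : IntegrableOn f twoScaleDom) (hv : ContinuousOn v (Icc 0 1)) :
    ∫ p in twoScaleDom, f p * v p.1 = ∫ x in Ioo (0 : ℝ) 1, fH f x * v x := by
  have hint := integrableOn_twoScaleDom_mul_fst hf hv
  rw [IntegrableOn, volume_restrict_twoScaleDom] at hint
  rw [volume_restrict_twoScaleDom, integral_prod _ hint]
  have fH_eq (x : ℝ) : fH f x = ∫ y in Ioo (-(1 / 2) : ℝ) (1 / 2), f (x, y) := by
    rw [fH, intervalIntegral.integral_of_le (by norm_num), integral_Ioc_eq_integral_Ioo]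
  simp only [integral_mul_const, fH_eq]

theorem seventh_block_macroscopic_problem_general {a : ℝ → ℝ} (ha : Continuous a)
    (ha0 : ∀ y, a y ≠ 0) {f0 : ℝ × ℝ → ℝ} (hf0 : IntegrableOn f0 twoScaleDom)
    {ub : ℝ → ℝ} (hub : ContDiff ℝ 1 ub) {u1 : ℝ → ℝ → ℝ}
    (hu1 : ∀ x y, HasDerivAt (u1 x) (deriv ub x * deriv (theta1 a) y) y)
    {v0 : ℝ → ℝ} (hv0 : ContDiff ℝ 1 v0)
    (hweak : ∫ p in twoScaleDom, a p.2 * (deriv ub p.1 + deriv (u1 p.1) p.2) * deriv v0 p.1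
      = ∫ p in twoScaleDom, f0 p * v0 p.1) :
    ∫ x in Ioo (0 : ℝ) 1, aH a * deriv ub x * deriv v0 x
      = ∫ x in Ioo (0 : ℝ) 1, fH f0 x * v0 x := by
  have flux (x y : ℝ) : a y * (deriv ub x + deriv (u1 x) y) = aH a * deriv ub x := by
    rw [(hu1 x y).deriv, aH_eq_harmMean ha ha0, ← mul_one_add_deriv_theta1 ha ha0 y]
    ring
  calc ∫ x in Ioo (0 : ℝ) 1, aH a * deriv ub x * deriv v0 x
      = ∫ p in twoScaleDom, aH a * deriv ub p.1 * deriv v0 p.1 :=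
        (setIntegral_twoScaleDom_fun_fst fun x => aH a * deriv ub x * deriv v0 x).symm
    _ = ∫ p in twoScaleDom, a p.2 * (deriv ub p.1 + deriv (u1 p.1) p.2) * deriv v0 p.1 := by
        simp only [flux]
    _ = ∫ p in twoScaleDom, f0 p * v0 p.1 := hweak
    _ = ∫ x in Ioo (0 : ℝ) 1, fH f0 x * v0 x :=
        setIntegral_twoScaleDom_mul_fst hf0 hv0.continuous.continuousOn

/-- **Seventh Block: macroscopic (homogenized) problem.** If `(ū, ũ¹)` solves
the two-scale weak formulation and `∂ũ¹/∂y(x,y) = ū'(x)(θ¹)'(y)`, then `ū`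
solves the homogenized weak formulation `∫ a^H ū' (v⁰)' = ∫ f^H v⁰` for every
`C¹` test function `v⁰` compactly supported in `(0,1)`. -/
theorem seventh_block_macroscopic_problem (a : ℝ → ℝ) (α β : ℝ)
    (ha : Continuous a) (haper : ∀ y, a (y + 1) = a y)
    (hα : 0 < α) (hαβ : α ≤ β) (hbound : ∀ y, α ≤ a y ∧ a y ≤ β)
    (f0 : ℝ × ℝ → ℝ) (hf0 : MemLp f0 2 (volume.restrict twoScaleDom))
    (ub : ℝ → ℝ) (hub : ContDiff ℝ 1 ub)
    (u1 : ℝ → ℝ → ℝ) (hu1c : Continuous (fun p : ℝ × ℝ => u1 p.1 p.2))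
    (hu1per : ∀ x y : ℝ, u1 x (y + 1) = u1 x y)
    (u1y : ℝ → ℝ → ℝ)
    (hu1y : ∀ x y : ℝ, HasDerivAt (fun t => u1 x t) (u1y x y) y)
    (hu1yc : Continuous (fun p : ℝ × ℝ => u1y p.1 p.2))
    (hu1yeq : ∀ x y : ℝ, u1y x y = deriv ub x * deriv (theta1 a) y)
    (hweak : ∀ v0 : ℝ → ℝ, ContDiff ℝ 1 v0 → HasCompactSupport v0 →
      tsupport v0 ⊆ Ioo (0 : ℝ) 1 →
      ∀ v1 : ℝ → ℝ → ℝ, ContDiff ℝ 1 (fun p : ℝ × ℝ => v1 p.1 p.2) →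
        (∀ x y : ℝ, v1 x (y + 1) = v1 x y) →
        (∃ K : Set ℝ, IsCompact K ∧ K ⊆ Ioo (0 : ℝ) 1 ∧
          ∀ x ∉ K, ∀ y : ℝ, v1 x y = 0) →
        ∫ p in twoScaleDom,
            a p.2 * (deriv ub p.1 + u1y p.1 p.2)
              * (deriv v0 p.1 + deriv (fun y => v1 p.1 y) p.2)
          = ∫ p in twoScaleDom, f0 p * v0 p.1) :
    ∀ v0 : ℝ → ℝ, ContDiff ℝ 1 v0 → HasCompactSupport v0 →
      tsupport v0 ⊆ Ioo (0 : ℝ) 1 →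
      ∫ x in Ioo (0 : ℝ) 1, aH a * deriv ub x * deriv v0 x
        = ∫ x in Ioo (0 : ℝ) 1, fH f0 x * v0 x := by
  intro v0 hv0 hv0c hv0s
  refine seventh_block_macroscopic_problem_general ha (fun y => (hα.trans_le (hbound y).1).ne')
    (hf0.integrable one_le_two) hub (fun x y => hu1yeq x y ▸ hu1y x y) hv0 ?_
  simpa only [(hu1y _ _).deriv, deriv_const, add_zero] using
    hweak v0 hv0 hv0c hv0s (fun _ _ => 0) contDiff_const (fun _ _ => rfl)
      ⟨∅, isCompact_empty, empty_subset _, fun _ _ _ => rfl⟩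
end
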